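/- arXiv:1007.3425 — 3 statements merged into one kernel-verified Lean document; each statement's English description precedes it below -/
import Mathlib

section
/- Let p > 2 and set q = p/(p − 2), so that 1/q + 2/p = 1. Let ε ≥ 0, let K ≥ 1, and let X ≥ 0 be a real number satisfying X ≤ ε²·(K + X/2)^{1/q}. Then X ≤ 2^{p/2}·(ε² + ε^p)·K^{1/q}. -/
/-!
Since `K + X / 2` is the midpoint of `2 * K` and `X`, it is at most the larger of the two. If that
is `2 * K`, the hypothesis bounds `X` by `ε² (2K)^{1/q}`; if it is `X`, the hypothesis becomes
`X ≤ ε² X^{1/q}`, and absorbing the sublinear power gives `X ≤ (ε²)^{p/2} = ε^p`, because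
`1 - 1/q = 2/p`.
-/

section SublinearAbsorption

variable {a b x θ : ℝ}

theorem le_rpow_inv_one_sub_of_le_mul_rpow (ha : 0 ≤ a) (hθ : θ < 1) (h : x ≤ a * x ^ θ) :
    x ≤ a ^ (1 - θ)⁻¹ := by
  rcases le_or_gt x 0 with hx | hx
  · exact hx.trans (Real.rpow_nonneg ha _)
  · rw [Real.le_rpow_inv_iff_of_pos hx.le ha (sub_pos.mpr hθ), Real.rpow_sub hx, Real.rpow_one]
    exact div_le_of_le_mul₀ (Real.rpow_nonneg hx.le _) ha h

theorem le_max_of_le_mul_add_half_rpow (ha : 0 ≤ a) (hb : 0 ≤ b) (hx : 0 ≤ x)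
    (hθ₀ : 0 ≤ θ) (hθ₁ : θ < 1) (h : x ≤ a * (b + x / 2) ^ θ) :
    x ≤ max (a * (2 * b) ^ θ) (a ^ (1 - θ)⁻¹) := by
  rcases le_total x (2 * b) with hxb | hbx
  · refine le_max_of_le_left (h.trans ?_)
    gcongr
    linarith
  · refine le_max_of_le_right (le_rpow_inv_one_sub_of_le_mul_rpow ha hθ₁ (h.trans ?_))
    gcongr
    linarith

theorem le_two_rpow_mul_add_mul_rpow_of_le_mul_add_half_rpow (ha : 0 ≤ a) (hb : 1 ≤ b)
    (hx : 0 ≤ x) (hθ₀ : 0 ≤ θ) (hθ₁ : θ < 1) (h : x ≤ a * (b + x / 2) ^ θ) :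
    x ≤ 2 ^ θ * (a + a ^ (1 - θ)⁻¹) * b ^ θ := by
  have hb₀ : 0 ≤ b := zero_le_one.trans hb
  refine (le_max_of_le_mul_add_half_rpow ha hb₀ hx hθ₀ hθ₁ h).trans (max_le ?_ ?_)
  · calc a * (2 * b) ^ θ = 2 ^ θ * a * b ^ θ := by
          rw [Real.mul_rpow zero_le_two hb₀]
          ring
      _ ≤ 2 ^ θ * (a + a ^ (1 - θ)⁻¹) * b ^ θ := by
          gcongr
          exact le_add_of_nonneg_right (by positivity)
  · calc a ^ (1 - θ)⁻¹ = 1 * a ^ (1 - θ)⁻¹ * 1 := by ring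
      _ ≤ 2 ^ θ * (a + a ^ (1 - θ)⁻¹) * b ^ θ := by
          gcongr
          · exact Real.one_le_rpow one_le_two hθ₀
          · exact le_add_of_nonneg_left ha
          · exact Real.one_le_rpow hb hθ₀

end SublinearAbsorption

/-- real-variable inequality underlying Lemma 4.2.
For `p > 2`, `q = p/(p−2)`, `ε ≥ 0`, `K ≥ 1`, `X ≥ 0`: if `X ≤ ε² (K + X/2)^{1/q}` then
`X ≤ 2^{p/2} (ε² + ε^p) K^{1/q}`. -/
theorem stmt3 (p q ε K X : ℝ) (hp : 2 < p) (hq : q = p / (p - 2))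
    (hε : 0 ≤ ε) (hK : 1 ≤ K) (hX : 0 ≤ X)
    (h : X ≤ ε ^ (2 : ℝ) * (K + X / 2) ^ (1 / q)) :
    X ≤ 2 ^ (p / 2) * (ε ^ (2 : ℝ) + ε ^ p) * K ^ (1 / q) := by
  have hq_pos : 0 < 1 / q := by
    rw [hq]
    exact one_div_pos.mpr (div_pos (by linarith) (by linarith))
  have hpq : 1 - 1 / q = 2 / p := by
    rw [hq]
    field_simp
    ring
  have hq_lt : 1 / q < 1 := sub_pos.mp (hpq ▸ by positivity)
  have hεp : (ε ^ (2 : ℝ)) ^ (1 - 1 / q)⁻¹ = ε ^ p := by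
    rw [hpq, inv_div, ← Real.rpow_mul hε, mul_div_cancel₀ p two_ne_zero]
  calc X ≤ 2 ^ (1 / q) * (ε ^ (2 : ℝ) + ε ^ p) * K ^ (1 / q) :=
        hεp ▸ le_two_rpow_mul_add_mul_rpow_of_le_mul_add_half_rpow
          (by positivity) hK hX hq_pos.le hq_lt h
    _ ≤ 2 ^ (p / 2) * (ε ^ (2 : ℝ) + ε ^ p) * K ^ (1 / q) := by
        have hq_le : 1 / q ≤ p / 2 := by linarith
        gcongr
        exact one_le_two
end

section
/- Let (Ω, μ) be a measure space, let ρ : Ω → ℝ be a nonnegative measurable function, let 0 < s < t be real numbers, let k > 0 be a real number, and let h : Ω → ℝ be integrable on the set {x ∈ Ω : ρ(x) < t}. Then ∫_s^t r^{−k−1} (∫_{{ρ < r}} h dμ) dr = (1/k) ∫_{{ρ < t}} h(x)·( (max{ρ(x), s})^{−k} − t^{−k} ) dμ(x). -/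
open MeasureTheory Set

section Fubini

variable {α Ω E : Type*} [MeasurableSpace α] [MeasurableSpace Ω]
  [NormedAddCommGroup E] [NormedSpace ℝ E] [CompleteSpace E]
  {ν : Measure α} [SFinite ν] {μ : Measure Ω} {w : α → ℝ} {h : Ω → E} {S : Set (α × Ω)}

theorem integral_smul_setIntegral_swap_of_sFinite [SFinite μ] (hS : MeasurableSet S)
    (hw : Integrable w ν) (hh : Integrable h μ) :
    ∫ r, w r • ∫ x in {x | (r, x) ∈ S}, h x ∂μ ∂ν =
      ∫ x, (∫ r in {r | (r, x) ∈ S}, w r ∂ν) • h x ∂μ := by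
  let F : α → Ω → E := fun r x ↦ S.indicator (fun p ↦ w p.1 • h p.2) (r, x)
  have hF : Integrable (Function.uncurry F) (ν.prod μ) := (hw.smul_prod hh).indicator hS
  have integral_right (r : α) : ∫ x, F r x ∂μ = w r • ∫ x in {x | (r, x) ∈ S}, h x ∂μ := by
    have hSr : MeasurableSet {x | (r, x) ∈ S} := measurable_prodMk_left hS
    rw [← integral_smul, ← integral_indicator hSr]
    rfl
  have integral_left (x : Ω) : ∫ r, F r x ∂ν = (∫ r in {r | (r, x) ∈ S}, w r ∂ν) • h x := by
    have hSx : MeasurableSet {r | (r, x) ∈ S} := measurable_prodMk_right hS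
    rw [← integral_smul_const, ← integral_indicator hSx]
    rfl
  simpa only [integral_right, integral_left] using integral_integral_swap hF

/- An integrable `h` vanishes almost everywhere outside a set on which `μ` is σ-finite, so Fubini's
theorem applies even though `μ` itself is arbitrary. -/
theorem integral_smul_setIntegral_swap (hS : MeasurableSet S)
    (hw : Integrable w ν) (hh : Integrable h μ) :
    ∫ r, w r • ∫ x in {x | (r, x) ∈ S}, h x ∂μ ∂ν =
      ∫ x, (∫ r in {r | (r, x) ∈ S}, w r ∂ν) • h x ∂μ := by
  obtain ⟨T, hT, h_zero, _⟩ := hh.aefinStronglyMeasurable.exists_set_sigmaFinite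
  have h_zero : ∀ᵐ x ∂μ, x ∉ T → h x = 0 := (ae_restrict_iff' hT.compl).1 h_zero
  have restrict_left (r : α) :
      ∫ x in {x | (r, x) ∈ S}, h x ∂μ.restrict T = ∫ x in {x | (r, x) ∈ S}, h x ∂μ := by
    rw [← Measure.restrict_comm hT]
    exact setIntegral_eq_integral_of_ae_compl_eq_zero (ae_restrict_of_ae h_zero)
  have restrict_right :
      ∫ x in T, (∫ r in {r | (r, x) ∈ S}, w r ∂ν) • h x ∂μ =
        ∫ x, (∫ r in {r | (r, x) ∈ S}, w r ∂ν) • h x ∂μ := by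
    refine setIntegral_eq_integral_of_ae_compl_eq_zero ?_
    filter_upwards [h_zero] with x hx hxT
    rw [hx hxT, smul_zero]
  simpa only [restrict_left, restrict_right] using
    integral_smul_setIntegral_swap_of_sFinite hS hw (hh.restrict (s := T))

end Fubini

theorem setIntegral_Ioi_restrict_Ioc {E : Type*} [NormedAddCommGroup E] [NormedSpace ℝ E]
    {a s t : ℝ} (hat : a ≤ t) (hst : s ≤ t) (f : ℝ → E) (ν : Measure ℝ) :
    ∫ r in Ioi a, f r ∂ν.restrict (Ioc s t) = ∫ r in max a s..t, f r ∂ν := by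
  rw [Measure.restrict_restrict measurableSet_Ioi, inter_comm, Ioc_inter_Ioi, max_comm,
    intervalIntegral.integral_of_le (max_le hat hst)]

theorem integral_rpow_neg_sub_one {a b k : ℝ} (ha : 0 < a) (hb : 0 < b) (hk : k ≠ 0) :
    ∫ r in a..b, r ^ (-k - 1) = (1 / k) * (a ^ (-k) - b ^ (-k)) := by
  have exponent_ne : -k - 1 ≠ -1 := by simpa [sub_eq_iff_eq_add] using hk
  rw [integral_rpow (Or.inr ⟨exponent_ne, notMem_uIcc_of_lt ha hb⟩), sub_add_cancel]
  field_simp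
  ring

section Sublevel

variable {Ω E : Type*} [MeasurableSpace Ω]
  [NormedAddCommGroup E] [NormedSpace ℝ E] [CompleteSpace E]
  {μ : Measure Ω} {ρ : Ω → ℝ} {h : Ω → E} {s t : ℝ}

theorem intervalIntegral_smul_setIntegral_lt {ν : Measure ℝ} [SFinite ν] {w : ℝ → ℝ}
    (hρ : Measurable ρ) (hst : s ≤ t) (hw : IntervalIntegrable w ν s t)
    (hh : IntegrableOn h {x | ρ x < t} μ) :
    ∫ r in s..t, w r • ∫ x in {x | ρ x < r}, h x ∂μ ∂ν =
      ∫ x in {x | ρ x < t}, (∫ r in max (ρ x) s..t, w r ∂ν) • h x ∂μ := by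
  have measurableSet_epigraph : MeasurableSet {p : ℝ × Ω | ρ p.2 < p.1} :=
    measurableSet_lt (hρ.comp measurable_snd) measurable_fst
  have measurableSet_sublevel : MeasurableSet {x | ρ x < t} := measurableSet_lt hρ measurable_const
  calc
    ∫ r in s..t, w r • ∫ x in {x | ρ x < r}, h x ∂μ ∂ν
    _ = ∫ r in Ioc s t, w r • ∫ x in {x | ρ x < r}, h x ∂μ.restrict {x | ρ x < t} ∂ν := by
      rw [intervalIntegral.integral_of_le hst]
      refine setIntegral_congr_fun measurableSet_Ioc fun r hr ↦ ?_
      have sublevel_subset : {x | ρ x < r} ⊆ {x | ρ x < t} := fun x hx ↦ hx.trans_le hr.2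
      simp only [Measure.restrict_restrict_of_subset sublevel_subset]
    _ = ∫ x in {x | ρ x < t}, (∫ r in Ioi (ρ x), w r ∂ν.restrict (Ioc s t)) • h x ∂μ :=
      integral_smul_setIntegral_swap measurableSet_epigraph hw.1 hh
    _ = ∫ x in {x | ρ x < t}, (∫ r in max (ρ x) s..t, w r ∂ν) • h x ∂μ := by
      refine setIntegral_congr_fun measurableSet_sublevel fun x hx ↦ ?_
      simp only [setIntegral_Ioi_restrict_Ioc (le_of_lt hx) hst]

theorem stmt4_general {k : ℝ} (hρ : Measurable ρ) (hs : 0 < s) (hst : s ≤ t) (hk : k ≠ 0)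
    (hh : IntegrableOn h {x | ρ x < t} μ) :
    ∫ r in s..t, r ^ (-k - 1) • ∫ x in {x | ρ x < r}, h x ∂μ =
      (1 / k) • ∫ x in {x | ρ x < t}, (max (ρ x) s ^ (-k) - t ^ (-k)) • h x ∂μ := by
  have ht : 0 < t := hs.trans_le hst
  have hw : IntervalIntegrable (fun r : ℝ ↦ r ^ (-k - 1)) volume s t :=
    intervalIntegral.intervalIntegrable_rpow (Or.inr (notMem_uIcc_of_lt hs ht))
  have integral_weight (x : Ω) :
      ∫ r in max (ρ x) s..t, r ^ (-k - 1) = (1 / k) * (max (ρ x) s ^ (-k) - t ^ (-k)) :=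
    integral_rpow_neg_sub_one (lt_max_of_lt_right hs) ht hk
  simp only [intervalIntegral_smul_setIntegral_lt hρ hst hw hh, integral_weight, mul_smul,
    integral_smul]

end Sublevel

/-- integration-by-parts/Fubini identity of Remark 2.2.
For a measure space `(Ω, μ)`, a nonnegative measurable `ρ`, `0 < s < t`, `k > 0` and
`h` integrable on `{ρ < t}`:
`∫_s^t r^{−k−1} (∫_{{ρ<r}} h dμ) dr = (1/k) ∫_{{ρ<t}} h(x) ((max{ρ(x),s})^{−k} − t^{−k}) dμ`. -/
theorem stmt4 {Ω : Type*} [MeasurableSpace Ω] (μ : Measure Ω)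
    (ρ : Ω → ℝ) (hρmeas : Measurable ρ) (hρnonneg : ∀ x, 0 ≤ ρ x)
    (s t k : ℝ) (hs : 0 < s) (hst : s < t) (hk : 0 < k)
    (h : Ω → ℝ) (hint : IntegrableOn h {x | ρ x < t} μ) :
    (∫ r in s..t, r ^ (-k - 1) * ∫ x in {x | ρ x < r}, h x ∂μ) =
      (1 / k) * ∫ x in {x | ρ x < t}, h x * ((max (ρ x) s) ^ (-k) - t ^ (-k)) ∂μ := by
  simpa only [smul_eq_mul, mul_comm (h _)] using stmt4_general hρmeas hs hst.le hk.ne' hint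
end

section
/- For α ∈ (0, 1/2) and ε ∈ (0, 1) define u_ε : ℝ² → ℝ by u_ε(x, y) = x·y·(log(x² + y² + ε))^α / (log ε)^α, and let D denote the closed disk {(x,y) : x² + y² ≤ 1/4} in ℝ². Then: (i) for every ε ∈ (0,1), the gradient of u_ε vanishes at the origin and the mixed second partial derivative satisfies ∂²u_ε/∂x∂y (0,0) = 1; (ii) sup_{(x,y) ∈ D} ‖∇u_ε(x,y)‖ → 0 as ε → 0⁺; (iii) ∫_D ( (∂²u_ε/∂x²)² + 2(∂²u_ε/∂x∂y)² + (∂²u_ε/∂y²)² ) → 0 as ε → 0⁺. -/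
open Set Filter MeasureTheory

/-- The function `u_ε(x,y) = x y (log(x²+y²+ε))^α / (log ε)^α` of Remark 2.5, interpreted
(as both logarithms are negative on the relevant range) as
`x y (log(x²+y²+ε)/log ε)^α` with a real power of the positive ratio. -/
noncomputable def uFun (α ε : ℝ) (p : ℝ × ℝ) : ℝ :=
  p.1 * p.2 * (Real.log (p.1 ^ 2 + p.2 ^ 2 + ε) / Real.log ε) ^ α

/-- The closed disk of radius `1/2` centered at the origin in `ℝ²`. -/
def diskD : Set (ℝ × ℝ) := {p | p.1 ^ 2 + p.2 ^ 2 ≤ 1 / 4}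

/-- Second partial derivative `∂²u/∂x²`. -/
noncomputable def uxx (α ε : ℝ) (p : ℝ × ℝ) : ℝ :=
  deriv (fun x => deriv (fun x' => uFun α ε (x', p.2)) x) p.1

/-- Mixed second partial derivative `∂²u/∂x∂y`. -/
noncomputable def uxy (α ε : ℝ) (p : ℝ × ℝ) : ℝ :=
  deriv (fun x => deriv (fun y => uFun α ε (x, y)) p.2) p.1

/-- Second partial derivative `∂²u/∂y²`. -/
noncomputable def uyy (α ε : ℝ) (p : ℝ × ℝ) : ℝ :=
  deriv (fun y => deriv (fun y' => uFun α ε (p.1, y')) y) p.2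

/-! Write `u_ε(x, y) = x y g(x² + y² + ε)` with `g(s) = (log s / log ε) ^ α`. Differentiating `g`
costs a factor `1 / s` and gains a factor `1 / log s`, so on the disk `s |g'(s)|` and `s² |g''(s)|`
are at most constant multiples of `g(s)`. As `x²` and `y²` are at most `s`, it follows that
`|D²u_ε| ≲ g(s)` and `|∇u_ε| ≲ √s g(s)`. Finally, `(-log s) ^ α ≲ s ^ (-1/4)` bounds `g(s)` by a
constant times `(-log ε) ^ (-α) s ^ (-1/4)`. The first factor tends to `0` with `ε`, and the second
is harmless: `√s s ^ (-1/4)` is bounded, and `(s ^ (-1/4))² ≤ 1 / ‖(x, y)‖` is integrable over the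
disk.
-/

open Topology

section Saddle

/-- The saddle `x y` modulated by a radial profile: `(x, y) ↦ x y h(x² + y²)`. The functions `u_ε`
are of this form, with the shift by `ε` absorbed into the profile `h`. -/
noncomputable def saddle (h : ℝ → ℝ) (p : ℝ × ℝ) : ℝ :=
  p.1 * p.2 * h (p.1 ^ 2 + p.2 ^ 2)

lemma saddle_swap (h : ℝ → ℝ) (x y : ℝ) : saddle h (x, y) = saddle h (y, x) := by
  simp only [saddle, mul_comm x, add_comm (x ^ 2)]

variable {h h' : ℝ → ℝ} {x y d d₂ : ℝ}

lemma hasDerivAt_comp_sq_add_sq (hd : HasDerivAt h d (x ^ 2 + y ^ 2)) :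
    HasDerivAt (fun x ↦ h (x ^ 2 + y ^ 2)) (d * (2 * x)) x := by
  have hsq : HasDerivAt (fun x : ℝ ↦ x ^ 2 + y ^ 2) (2 * x) x := by
    simpa using (hasDerivAt_pow 2 x).add_const (y ^ 2)
  exact hd.comp x hsq

lemma eventually_sq_add_sq {P : ℝ → Prop} (hP : ∀ᶠ t in 𝓝 (x ^ 2 + y ^ 2), P t) :
    ∀ᶠ x' in 𝓝 x, P (x' ^ 2 + y ^ 2) :=
  (show ContinuousAt (fun x' : ℝ ↦ x' ^ 2 + y ^ 2) x by fun_prop).eventually hP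

lemma hasDerivAt_saddle_fst (hd : HasDerivAt h d (x ^ 2 + y ^ 2)) :
    HasDerivAt (fun x ↦ saddle h (x, y)) (y * (h (x ^ 2 + y ^ 2) + 2 * x ^ 2 * d)) x := by
  refine (((hasDerivAt_id x).mul_const y).mul (hasDerivAt_comp_sq_add_sq hd)).congr_deriv ?_
  simp only [id]
  ring

lemma hasDerivAt_saddle_snd (hd : HasDerivAt h d (x ^ 2 + y ^ 2)) :
    HasDerivAt (fun y ↦ saddle h (x, y)) (x * (h (x ^ 2 + y ^ 2) + 2 * y ^ 2 * d)) y := by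
  simp only [saddle_swap h x, add_comm (x ^ 2)] at hd ⊢
  exact hasDerivAt_saddle_fst hd

lemma hasFDerivAt_saddle (hd : HasDerivAt h d (x ^ 2 + y ^ 2)) :
    HasFDerivAt (saddle h)
      ((y * (h (x ^ 2 + y ^ 2) + 2 * x ^ 2 * d)) • ContinuousLinearMap.fst ℝ ℝ ℝ +
        (x * (h (x ^ 2 + y ^ 2) + 2 * y ^ 2 * d)) • ContinuousLinearMap.snd ℝ ℝ ℝ) (x, y) := by
  have hx : HasFDerivAt (fun p : ℝ × ℝ ↦ p.1) (ContinuousLinearMap.fst ℝ ℝ ℝ) (x, y) :=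
    hasFDerivAt_fst
  have hy : HasFDerivAt (fun p : ℝ × ℝ ↦ p.2) (ContinuousLinearMap.snd ℝ ℝ ℝ) (x, y) :=
    hasFDerivAt_snd
  have hprofile := hd.comp_hasFDerivAt (x, y) ((hx.pow 2).add (hy.pow 2))
  refine ((hx.mul hy).mul hprofile).congr_fderiv ?_
  ext <;> simp <;> ring

lemma deriv_deriv_saddle_fst_fst (hh : ∀ᶠ t in 𝓝 (x ^ 2 + y ^ 2), HasDerivAt h (h' t) t)
    (hh' : HasDerivAt h' d₂ (x ^ 2 + y ^ 2)) :
    deriv (fun x ↦ deriv (fun x' ↦ saddle h (x', y)) x) x =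
      2 * x * y * (3 * h' (x ^ 2 + y ^ 2) + 2 * x ^ 2 * d₂) := by
  have hfirst : (fun x ↦ deriv (fun x' ↦ saddle h (x', y)) x) =ᶠ[𝓝 x]
      fun x ↦ y * (h (x ^ 2 + y ^ 2) + 2 * x ^ 2 * h' (x ^ 2 + y ^ 2)) := by
    filter_upwards [eventually_sq_add_sq hh] with t ht using (hasDerivAt_saddle_fst ht).deriv
  have hsecond := ((hasDerivAt_comp_sq_add_sq hh.self_of_nhds).add
    (((hasDerivAt_pow 2 x).const_mul 2).mul (hasDerivAt_comp_sq_add_sq hh'))).const_mul y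
  refine hfirst.deriv_eq.trans (hsecond.deriv.trans ?_)
  push_cast
  ring

lemma deriv_deriv_saddle_snd_snd (hh : ∀ᶠ t in 𝓝 (x ^ 2 + y ^ 2), HasDerivAt h (h' t) t)
    (hh' : HasDerivAt h' d₂ (x ^ 2 + y ^ 2)) :
    deriv (fun y ↦ deriv (fun y' ↦ saddle h (x, y')) y) y =
      2 * y * x * (3 * h' (x ^ 2 + y ^ 2) + 2 * y ^ 2 * d₂) := by
  simp only [saddle_swap h x, add_comm (x ^ 2)] at hh hh' ⊢
  exact deriv_deriv_saddle_fst_fst hh hh'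

lemma deriv_deriv_saddle_fst_snd (hh : ∀ᶠ t in 𝓝 (x ^ 2 + y ^ 2), HasDerivAt h (h' t) t)
    (hh' : HasDerivAt h' d₂ (x ^ 2 + y ^ 2)) :
    deriv (fun x ↦ deriv (fun y ↦ saddle h (x, y)) y) x =
      h (x ^ 2 + y ^ 2) + 2 * (x ^ 2 + y ^ 2) * h' (x ^ 2 + y ^ 2) + (2 * x * y) ^ 2 * d₂ := by
  have hfirst : (fun x ↦ deriv (fun y ↦ saddle h (x, y)) y) =ᶠ[𝓝 x]
      fun x ↦ x * (h (x ^ 2 + y ^ 2) + 2 * y ^ 2 * h' (x ^ 2 + y ^ 2)) := by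
    filter_upwards [eventually_sq_add_sq hh] with t ht using (hasDerivAt_saddle_snd ht).deriv
  have hsecond := (hasDerivAt_id x).mul ((hasDerivAt_comp_sq_add_sq hh.self_of_nhds).add
    ((hasDerivAt_comp_sq_add_sq hh').const_mul (2 * y ^ 2)))
  refine hfirst.deriv_eq.trans (hsecond.deriv.trans ?_)
  simp only [id, Pi.add_apply]
  ring

variable {C : ℝ}

lemma abs_partial_saddle_le {a : ℝ} (ha : |a| ≤ C) (hd : (x ^ 2 + y ^ 2) * |d| ≤ C) :
    |y * (a + 2 * x ^ 2 * d)| ≤ 3 * C * |y| :=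
  calc |y * (a + 2 * x ^ 2 * d)|
      ≤ |y| * (|a| + |2 * x ^ 2 * d|) := by
        rw [abs_mul]
        gcongr
        exact abs_add_le _ _
    _ = |y| * (|a| + 2 * (x ^ 2 * |d|)) := by
        rw [abs_mul, abs_of_nonneg (by positivity : 0 ≤ 2 * x ^ 2), mul_assoc]
    _ ≤ |y| * (C + 2 * C) := by
        gcongr
        nlinarith [mul_nonneg (sq_nonneg y) (abs_nonneg d)]
    _ = 3 * C * |y| := by ring

lemma norm_fderiv_saddle_le (hd : HasDerivAt h d (x ^ 2 + y ^ 2))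
    (h₀ : |h (x ^ 2 + y ^ 2)| ≤ C) (h₁ : (x ^ 2 + y ^ 2) * |d| ≤ C) :
    ‖fderiv ℝ (saddle h) (x, y)‖ ≤ 3 * C * |y| + 3 * C * |x| := by
  have hC : 0 ≤ C := (abs_nonneg _).trans h₀
  have hx := abs_partial_saddle_le h₀ h₁
  have hy := abs_partial_saddle_le (x := y) (y := x) h₀ (by rwa [add_comm])
  rw [(hasFDerivAt_saddle hd).fderiv]
  refine (norm_add_le _ _).trans (add_le_add ?_ ?_) <;> rw [norm_smul, Real.norm_eq_abs]
  · simpa using mul_le_mul hx (ContinuousLinearMap.norm_fst_le ℝ ℝ ℝ) (norm_nonneg _)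
      (by positivity)
  · simpa using mul_le_mul hy (ContinuousLinearMap.norm_snd_le ℝ ℝ ℝ) (norm_nonneg _)
      (by positivity)

lemma abs_two_mul_mul_le_add_sq (x y : ℝ) : |2 * x * y| ≤ x ^ 2 + y ^ 2 :=
  abs_le.2 ⟨by linarith [sq_nonneg (x + y)], two_mul_le_add_sq x y⟩

lemma abs_pure_partial_saddle_le (hd : (x ^ 2 + y ^ 2) * |d| ≤ C)
    (hd₂ : (x ^ 2 + y ^ 2) ^ 2 * |d₂| ≤ C) :
    |2 * x * y * (3 * d + 2 * x ^ 2 * d₂)| ≤ 5 * C :=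
  calc |2 * x * y * (3 * d + 2 * x ^ 2 * d₂)|
      ≤ |2 * x * y| * (|3 * d| + |2 * x ^ 2 * d₂|) := by
        rw [abs_mul]
        gcongr
        exact abs_add_le _ _
    _ = |2 * x * y| * (3 * |d| + 2 * x ^ 2 * |d₂|) := by
        rw [abs_mul 3, abs_mul (2 * x ^ 2), abs_of_nonneg (by positivity : 0 ≤ 2 * x ^ 2),
          abs_of_nonneg (by norm_num : (0 : ℝ) ≤ 3)]
    _ ≤ (x ^ 2 + y ^ 2) * (3 * |d| + 2 * (x ^ 2 + y ^ 2) * |d₂|) := by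
        gcongr
        · exact abs_two_mul_mul_le_add_sq x y
        · exact le_add_of_nonneg_right (sq_nonneg y)
    _ = 3 * ((x ^ 2 + y ^ 2) * |d|) + 2 * ((x ^ 2 + y ^ 2) ^ 2 * |d₂|) := by ring
    _ ≤ 5 * C := by linarith

lemma abs_mixed_partial_saddle_le {a : ℝ} (ha : |a| ≤ C) (hd : (x ^ 2 + y ^ 2) * |d| ≤ C)
    (hd₂ : (x ^ 2 + y ^ 2) ^ 2 * |d₂| ≤ C) :
    |a + 2 * (x ^ 2 + y ^ 2) * d + (2 * x * y) ^ 2 * d₂| ≤ 4 * C :=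
  calc |a + 2 * (x ^ 2 + y ^ 2) * d + (2 * x * y) ^ 2 * d₂|
      ≤ |a| + |2 * (x ^ 2 + y ^ 2) * d| + |(2 * x * y) ^ 2 * d₂| := abs_add_three _ _ _
    _ = |a| + 2 * ((x ^ 2 + y ^ 2) * |d|) + |2 * x * y| ^ 2 * |d₂| := by
        rw [abs_mul (2 * _), abs_mul (_ ^ 2), abs_pow,
          abs_of_nonneg (by positivity : 0 ≤ 2 * (x ^ 2 + y ^ 2)), mul_assoc 2]
    _ ≤ |a| + 2 * ((x ^ 2 + y ^ 2) * |d|) + (x ^ 2 + y ^ 2) ^ 2 * |d₂| := by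
        gcongr
        exact abs_two_mul_mul_le_add_sq x y
    _ ≤ 4 * C := by linarith

lemma hessian_saddle_sq_le (hh : ∀ᶠ t in 𝓝 (x ^ 2 + y ^ 2), HasDerivAt h (h' t) t)
    (hh' : HasDerivAt h' d₂ (x ^ 2 + y ^ 2)) (h₀ : |h (x ^ 2 + y ^ 2)| ≤ C)
    (h₁ : (x ^ 2 + y ^ 2) * |h' (x ^ 2 + y ^ 2)| ≤ C) (h₂ : (x ^ 2 + y ^ 2) ^ 2 * |d₂| ≤ C) :
    deriv (fun x ↦ deriv (fun x' ↦ saddle h (x', y)) x) x ^ 2 +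
        2 * deriv (fun x ↦ deriv (fun y ↦ saddle h (x, y)) y) x ^ 2 +
        deriv (fun y ↦ deriv (fun y' ↦ saddle h (x, y')) y) y ^ 2 ≤ 82 * C ^ 2 := by
  have hC : 0 ≤ C := (abs_nonneg _).trans h₀
  rw [deriv_deriv_saddle_fst_fst hh hh', deriv_deriv_saddle_fst_snd hh hh',
    deriv_deriv_saddle_snd_snd hh hh']
  have hxx := sq_le_sq.2 ((abs_pure_partial_saddle_le h₁ h₂).trans (le_abs_self _))
  have hxy := sq_le_sq.2 ((abs_mixed_partial_saddle_le h₀ h₁ h₂).trans (le_abs_self _))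
  rw [add_comm] at h₁ h₂
  have hyy := sq_le_sq.2 ((abs_pure_partial_saddle_le h₁ h₂).trans (le_abs_self _))
  rw [add_comm (y ^ 2)] at hyy
  linarith

end Saddle

section LogProfile

/-- The radial profile `s ↦ (log s / log ε) ^ α` of `u_ε`, as a function of `s = x² + y² + ε`. -/
noncomputable def logRatioPow (α ε s : ℝ) : ℝ := (Real.log s / Real.log ε) ^ α

variable {α ε s δ : ℝ}

lemma hasDerivAt_logRatioPow (hε : Real.log ε ≠ 0) (hs : Real.log s ≠ 0) :
    HasDerivAt (logRatioPow α ε) (α * logRatioPow α ε s / (s * Real.log s)) s := by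
  have hs0 : s ≠ 0 := fun h ↦ hs (by simp [h])
  refine (((Real.hasDerivAt_log hs0).div_const (Real.log ε)).rpow_const (p := α)
    (Or.inl (div_ne_zero hs hε))).congr_deriv ?_
  rw [Real.rpow_sub_one (div_ne_zero hs hε), logRatioPow]
  field_simp

lemma hasDerivAt_deriv_logRatioPow (hε : Real.log ε ≠ 0) (hs : Real.log s ≠ 0) :
    HasDerivAt (fun s ↦ α * logRatioPow α ε s / (s * Real.log s))
      (α * (α - 1 - Real.log s) * logRatioPow α ε s / (s * Real.log s) ^ 2) s := by
  have hs0 : s ≠ 0 := fun h ↦ hs (by simp [h])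
  refine (((hasDerivAt_logRatioPow hε hs).const_mul α).div
    ((hasDerivAt_id s).mul (Real.hasDerivAt_log hs0)) (mul_ne_zero hs0 hs)).congr_deriv ?_
  simp only [id, Pi.mul_apply]
  field_simp
  ring

lemma mul_abs_deriv_logRatioPow_le (hα : 0 ≤ α) (hs : 0 < s) (hlog : 1 / 2 ≤ |Real.log s|) :
    s * |α * logRatioPow α ε s / (s * Real.log s)| ≤ 2 * α * |logRatioPow α ε s| := by
  have : 0 < |Real.log s| := by linarith
  rw [abs_div, abs_mul, abs_mul, abs_of_nonneg hα, abs_of_pos hs]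
  calc s * (α * |logRatioPow α ε s| / (s * |Real.log s|))
      = α * |logRatioPow α ε s| / |Real.log s| := by field_simp
    _ ≤ α * |logRatioPow α ε s| / (1 / 2) := by gcongr
    _ = 2 * α * |logRatioPow α ε s| := by ring

lemma sq_mul_abs_deriv_deriv_logRatioPow_le (hα : 0 ≤ α) (hs : 0 < s)
    (hlog : 1 / 2 ≤ |Real.log s|) :
    s ^ 2 * |α * (α - 1 - Real.log s) * logRatioPow α ε s / (s * Real.log s) ^ 2| ≤
      (4 * α ^ 2 + 6 * α) * |logRatioPow α ε s| := by
  have : 0 < |Real.log s| := by linarith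
  have hnum : |α - 1 - Real.log s| ≤ (4 * α + 6) * |Real.log s| ^ 2 := by
    have htriangle : |α - 1 - Real.log s| ≤ α + 1 + |Real.log s| := by
      refine (abs_sub _ _).trans ?_
      gcongr
      exact abs_le.2 ⟨by linarith, by linarith⟩
    nlinarith [mul_nonneg hα (by nlinarith : 0 ≤ 4 * |Real.log s| ^ 2 - 1)]
  rw [abs_div, abs_mul, abs_mul, abs_pow, abs_mul, abs_of_nonneg hα, abs_of_pos hs]
  calc s ^ 2 * (α * |α - 1 - Real.log s| * |logRatioPow α ε s| / (s * |Real.log s|) ^ 2)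
      = α * |α - 1 - Real.log s| * |logRatioPow α ε s| / |Real.log s| ^ 2 := by field_simp
    _ ≤ α * ((4 * α + 6) * |Real.log s| ^ 2) * |logRatioPow α ε s| / |Real.log s| ^ 2 := by
        gcongr
    _ = (4 * α ^ 2 + 6 * α) * |logRatioPow α ε s| := by field_simp

lemma neg_log_rpow_le (hα : 0 < α) (hδ : 0 < δ) (hs : 0 < s) (hs1 : s ≤ 1) :
    (-Real.log s) ^ α ≤ (α / δ) ^ α * s ^ (-δ) := by
  have hlog : -Real.log s ≤ α / δ * s ^ (-(δ / α)) := by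
    have h := Real.log_le_rpow_div (inv_nonneg.2 hs.le) (div_pos hδ hα)
    rwa [Real.log_inv, Real.inv_rpow hs.le, ← Real.rpow_neg hs.le, div_div_eq_mul_div,
      mul_comm, mul_div_right_comm] at h
  calc (-Real.log s) ^ α
      ≤ (α / δ * s ^ (-(δ / α))) ^ α :=
        Real.rpow_le_rpow (neg_nonneg.2 (Real.log_nonpos hs.le hs1)) hlog hα.le
    _ = (α / δ) ^ α * s ^ (-δ) := by
        rw [Real.mul_rpow (by positivity) (by positivity), ← Real.rpow_mul hs.le,
          neg_mul, div_mul_cancel₀ _ hα.ne']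

lemma abs_logRatioPow_le (hα : 0 < α) (hδ : 0 < δ) (hε : ε ∈ Ioo 0 1) (hs : 0 < s)
    (hs1 : s ≤ 1) :
    |logRatioPow α ε s| ≤ (α / δ) ^ α * (-Real.log ε) ^ (-α) * s ^ (-δ) := by
  have hlogs : 0 ≤ -Real.log s := neg_nonneg.2 (Real.log_nonpos hs.le hs1)
  have hlogε : 0 ≤ -Real.log ε := neg_nonneg.2 (Real.log_nonpos hε.1.le hε.2.le)
  calc |logRatioPow α ε s|
      = (-Real.log s) ^ α * (-Real.log ε) ^ (-α) := by
        rw [logRatioPow, ← neg_div_neg_eq, abs_of_nonneg (by positivity),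
          Real.div_rpow hlogs hlogε, Real.rpow_neg hlogε, div_eq_mul_inv]
    _ ≤ (α / δ) ^ α * s ^ (-δ) * (-Real.log ε) ^ (-α) := by
        gcongr
        exact neg_log_rpow_le hα hδ hs hs1
    _ = (α / δ) ^ α * (-Real.log ε) ^ (-α) * s ^ (-δ) := by ring

lemma half_le_abs_log (hs : 0 < s) (hs1 : s ≤ 1 / 2) : 1 / 2 ≤ |Real.log s| :=
  le_abs.2 (Or.inr (by linarith [Real.log_le_sub_one_of_pos hs]))

end LogProfile

section Decay

/-- The rate at which the derivatives of `u_ε` decay as `ε → 0⁺`: the factor `(-log ε) ^ (-α)` times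
a constant chosen so that `decayRate α ε * s ^ (-1/4)` bounds `|g|`, `s |g'|` and `s² |g''|` for
`g = logRatioPow α ε` and `s ≤ 1/2`. -/
noncomputable def decayRate (α ε : ℝ) : ℝ :=
  (1 + 3 * α) ^ 2 * ((α / (1 / 4)) ^ α * (-Real.log ε) ^ (-α))

variable {α ε s : ℝ}

lemma tendsto_decayRate (hα : 0 < α) : Tendsto (decayRate α) (𝓝[>] 0) (𝓝 0) := by
  have hlog : Tendsto (fun ε ↦ (-Real.log ε) ^ (-α)) (𝓝[>] 0) (𝓝 0) :=
    (tendsto_rpow_neg_atTop hα).comp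
      (tendsto_neg_atBot_atTop.comp Real.tendsto_log_nhdsGT_zero)
  simpa only [mul_zero] using!
    (hlog.const_mul ((α / (1 / 4)) ^ α)).const_mul ((1 + 3 * α) ^ 2)

lemma decayRate_nonneg (hα : 0 < α) (hε : ε ∈ Ioo 0 1) : 0 ≤ decayRate α ε := by
  have hlog : 0 ≤ -Real.log ε := neg_nonneg.2 (Real.log_nonpos hε.1.le hε.2.le)
  unfold decayRate
  positivity

lemma mul_abs_logRatioPow_le_decayRate {c : ℝ} (hα : 0 < α) (hε : ε ∈ Ioo 0 1) (hs : 0 < s)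
    (hs1 : s ≤ 1) (hc : c ≤ (1 + 3 * α) ^ 2) :
    c * |logRatioPow α ε s| ≤ decayRate α ε * s ^ (-(1 / 4) : ℝ) := by
  rw [decayRate, mul_assoc]
  exact mul_le_mul hc (abs_logRatioPow_le hα (by norm_num) hε hs hs1) (abs_nonneg _)
    (by positivity)

lemma logRatioPow_bounds (hα : 0 < α) (hε : ε ∈ Ioo 0 1) (hs : 0 < s) (hs1 : s ≤ 1 / 2) :
    |logRatioPow α ε s| ≤ decayRate α ε * s ^ (-(1 / 4) : ℝ) ∧
    s * |α * logRatioPow α ε s / (s * Real.log s)| ≤ decayRate α ε * s ^ (-(1 / 4) : ℝ) ∧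
    s ^ 2 * |α * (α - 1 - Real.log s) * logRatioPow α ε s / (s * Real.log s) ^ 2| ≤
      decayRate α ε * s ^ (-(1 / 4) : ℝ) := by
  have hlog := half_le_abs_log hs hs1
  have hbound {c : ℝ} (hc : c ≤ (1 + 3 * α) ^ 2) :=
    mul_abs_logRatioPow_le_decayRate hα hε hs (by linarith) hc
  refine ⟨?_, (mul_abs_deriv_logRatioPow_le hα.le hs hlog).trans (hbound (by nlinarith)),
    (sq_mul_abs_deriv_deriv_logRatioPow_le hα.le hs hlog).trans (hbound (by nlinarith))⟩
  simpa only [one_mul] using hbound (c := 1) (by nlinarith)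

end Decay

section Plane

lemma abs_mul_rpow_neg_le_one {x s δ : ℝ} (hs : 0 < s) (hs1 : s ≤ 1) (hx : x ^ 2 ≤ s)
    (hδ : δ ≤ 1 / 2) : |x| * s ^ (-δ) ≤ 1 := by
  rw [Real.rpow_neg hs.le, ← div_eq_mul_inv, div_le_one (Real.rpow_pos_of_pos hs δ)]
  calc |x| ≤ √s := Real.abs_le_sqrt hx
    _ = s ^ (1 / 2 : ℝ) := Real.sqrt_eq_rpow s
    _ ≤ s ^ δ := Real.rpow_le_rpow_of_exponent_ge hs hs1 hδ

lemma rpow_neg_sq_le {r s δ : ℝ} (hr : 0 < r) (hrs : r ^ 2 ≤ s) (hδ : 0 ≤ δ) :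
    (s ^ (-δ)) ^ 2 ≤ r ^ (-(4 * δ)) :=
  calc (s ^ (-δ)) ^ 2
      ≤ ((r ^ 2) ^ (-δ)) ^ 2 := by
        have : 0 ≤ s := (sq_nonneg r).trans hrs
        gcongr ?_ ^ 2
        exact Real.rpow_le_rpow_of_nonpos (by positivity) hrs (neg_nonpos.2 hδ)
    _ = r ^ (-(4 * δ)) := by
        rw [← Real.rpow_natCast_mul hr.le, ← Real.rpow_mul_natCast hr.le]
        congr 1
        push_cast
        ring

lemma norm_prod_sq_le (p : ℝ × ℝ) : ‖p‖ ^ 2 ≤ p.1 ^ 2 + p.2 ^ 2 := by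
  rw [Prod.norm_def, Real.norm_eq_abs, Real.norm_eq_abs]
  rcases max_cases |p.1| |p.2| with ⟨h, -⟩ | ⟨h, -⟩ <;> rw [h, sq_abs]
  · exact le_add_of_nonneg_right (sq_nonneg _)
  · exact le_add_of_nonneg_left (sq_nonneg _)

lemma integrableOn_ball_norm_rpow {E : Type*} [NormedAddCommGroup E] [NormedSpace ℝ E]
    [FiniteDimensional ℝ E] [Nontrivial E] [MeasurableSpace E] [BorelSpace E] (μ : Measure E)
    [μ.IsAddHaarMeasure] {r q : ℝ} (hq : -(Module.finrank ℝ E : ℝ) < q) :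
    IntegrableOn (fun x ↦ ‖x‖ ^ q) (Metric.ball (0 : E) r) μ := by
  rw [integrableOn_fun_norm_addHaar μ (f := fun t ↦ t ^ q)]
  rcases le_or_gt r 0 with hr | hr
  · simp [Ioo_eq_empty_of_le hr]
  have hexp : -1 < ((Module.finrank ℝ E - 1 : ℕ) : ℝ) + q := by
    rw [Nat.cast_pred Module.finrank_pos]
    linarith
  refine ((intervalIntegral.integrableOn_Ioo_rpow_iff hr).2 hexp).congr_fun (fun t ht ↦ ?_)
    measurableSet_Ioo
  simp only [Real.rpow_add ht.1, Real.rpow_natCast, smul_eq_mul]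

lemma measurableSet_diskD : MeasurableSet diskD :=
  (isClosed_le (by fun_prop) (by fun_prop) : IsClosed diskD).measurableSet

lemma diskD_subset_ball : diskD ⊆ Metric.ball 0 1 := fun p hp ↦ by
  have hsq : ‖p‖ ^ 2 ≤ 1 / 4 := (norm_prod_sq_le p).trans hp
  rw [mem_ball_zero_iff]
  nlinarith [norm_nonneg p]

end Plane

section UFun

variable {α ε : ℝ} {p : ℝ × ℝ}

lemma uFun_eq_saddle (α ε : ℝ) : uFun α ε = saddle fun t ↦ logRatioPow α ε (t + ε) := rfl

lemma hasDerivAt_logRatioPow_add {t : ℝ} (hε : ε ∈ Ioo 0 1) (ht : t + ε ∈ Ioo 0 1) :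
    HasDerivAt (fun t ↦ logRatioPow α ε (t + ε))
      (α * logRatioPow α ε (t + ε) / ((t + ε) * Real.log (t + ε))) t :=
  (hasDerivAt_logRatioPow (Real.log_neg hε.1 hε.2).ne
    (Real.log_neg ht.1 ht.2).ne).comp_add_const t ε

lemma eventually_hasDerivAt_logRatioPow_add {t : ℝ} (hε : ε ∈ Ioo 0 1) (ht : t + ε ∈ Ioo 0 1) :
    ∀ᶠ t in 𝓝 t, HasDerivAt (fun t ↦ logRatioPow α ε (t + ε))
      (α * logRatioPow α ε (t + ε) / ((t + ε) * Real.log (t + ε))) t := by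
  have hnear : ∀ᶠ t in 𝓝 t, t + ε ∈ Ioo 0 1 :=
    (continuous_add_const ε).continuousAt.eventually (isOpen_Ioo.mem_nhds ht)
  filter_upwards [hnear] with t ht using hasDerivAt_logRatioPow_add hε ht

lemma hasDerivAt_deriv_logRatioPow_add {t : ℝ} (hε : ε ∈ Ioo 0 1) (ht : t + ε ∈ Ioo 0 1) :
    HasDerivAt (fun t ↦ α * logRatioPow α ε (t + ε) / ((t + ε) * Real.log (t + ε)))
      (α * (α - 1 - Real.log (t + ε)) * logRatioPow α ε (t + ε) /
        ((t + ε) * Real.log (t + ε)) ^ 2) t :=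
  (hasDerivAt_deriv_logRatioPow (Real.log_neg hε.1 hε.2).ne
    (Real.log_neg ht.1 ht.2).ne).comp_add_const t ε

lemma fderiv_uFun_zero (α : ℝ) (hε : ε ∈ Ioo 0 1) : fderiv ℝ (uFun α ε) (0, 0) = 0 := by
  have hprofile := hasDerivAt_logRatioPow_add (α := α) (t := 0 ^ 2 + 0 ^ 2) hε (by simpa using hε)
  rw [uFun_eq_saddle, (hasFDerivAt_saddle hprofile).fderiv]
  simp

lemma uxy_zero (α : ℝ) (hε : ε ∈ Ioo 0 1) : uxy α ε (0, 0) = 1 := by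
  have hε' : (0 ^ 2 + 0 ^ 2 : ℝ) + ε ∈ Ioo 0 1 := by simpa using hε
  refine (deriv_deriv_saddle_fst_snd (eventually_hasDerivAt_logRatioPow_add (α := α) hε hε')
    (hasDerivAt_deriv_logRatioPow_add hε hε')).trans ?_
  simp [logRatioPow, div_self (Real.log_neg hε.1 hε.2).ne]

lemma norm_fderiv_uFun_le (hα : 0 < α) (hε : ε ∈ Ioo 0 (1 / 4)) (hp : p ∈ diskD) :
    ‖fderiv ℝ (uFun α ε) p‖ ≤ 6 * decayRate α ε := by
  obtain ⟨x, y⟩ := p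
  have hxy : x ^ 2 + y ^ 2 ≤ 1 / 4 := hp
  obtain ⟨hε0, hε4⟩ := hε
  have hε : ε ∈ Ioo 0 1 := ⟨hε0, by linarith⟩
  have hs : 0 < x ^ 2 + y ^ 2 + ε := by positivity
  obtain ⟨h₀, h₁, -⟩ := logRatioPow_bounds hα hε hs (by linarith)
  have hx := abs_mul_rpow_neg_le_one (x := x) (δ := 1 / 4) hs (by linarith) (by nlinarith)
    (by norm_num)
  have hy := abs_mul_rpow_neg_le_one (x := y) (δ := 1 / 4) hs (by linarith) (by nlinarith)
    (by norm_num)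
  have hgrad := norm_fderiv_saddle_le (hasDerivAt_logRatioPow_add hε ⟨hs, by linarith⟩) h₀
    (le_trans (by gcongr ?_ * _; linarith) h₁)
  have hdecay := decayRate_nonneg hα hε
  set S := (x ^ 2 + y ^ 2 + ε) ^ (-(1 / 4) : ℝ)
  calc ‖fderiv ℝ (uFun α ε) (x, y)‖
      ≤ 3 * (decayRate α ε * S) * |y| + 3 * (decayRate α ε * S) * |x| := hgrad
    _ = 3 * decayRate α ε * (|y| * S) + 3 * decayRate α ε * (|x| * S) := by ring
    _ ≤ 3 * decayRate α ε * 1 + 3 * decayRate α ε * 1 := by gcongr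
    _ = 6 * decayRate α ε := by ring

lemma hessian_uFun_sq_le (hα : 0 < α) (hε : ε ∈ Ioo 0 (1 / 4)) (hp : p ∈ diskD) (hp0 : p ≠ 0) :
    uxx α ε p ^ 2 + 2 * uxy α ε p ^ 2 + uyy α ε p ^ 2 ≤
      82 * decayRate α ε ^ 2 * ‖p‖ ^ (-1 : ℝ) := by
  have hnorm := norm_prod_sq_le p
  obtain ⟨x, y⟩ := p
  have hxy : x ^ 2 + y ^ 2 ≤ 1 / 4 := hp
  obtain ⟨hε0, hε4⟩ := hε
  have hε : ε ∈ Ioo 0 1 := ⟨hε0, by linarith⟩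
  have hs : 0 < x ^ 2 + y ^ 2 + ε := by positivity
  have hs1 : x ^ 2 + y ^ 2 + ε ∈ Ioo 0 1 := ⟨hs, by linarith⟩
  obtain ⟨h₀, h₁, h₂⟩ := logRatioPow_bounds hα hε hs (by linarith)
  have hsingular := rpow_neg_sq_le (δ := 1 / 4) (norm_pos_iff.2 hp0)
    (hnorm.trans (le_add_of_nonneg_right hε0.le)) (by norm_num)
  rw [show -(4 * (1 / 4)) = (-1 : ℝ) by norm_num] at hsingular
  refine (hessian_saddle_sq_le (eventually_hasDerivAt_logRatioPow_add hε hs1)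
    (hasDerivAt_deriv_logRatioPow_add hε hs1) h₀ (le_trans (by gcongr ?_ * _; linarith) h₁)
    (le_trans (by gcongr ?_ ^ 2 * _; linarith) h₂)).trans ?_
  rw [mul_pow, ← mul_assoc]
  gcongr

lemma tendsto_iSup_norm_fderiv_uFun (hα : 0 < α) :
    Tendsto (fun ε ↦ ⨆ p ∈ diskD, ‖fderiv ℝ (uFun α ε) p‖) (𝓝[>] 0) (𝓝 0) := by
  have hlim : Tendsto (fun ε ↦ 6 * decayRate α ε) (𝓝[>] 0) (𝓝 0) := by
    simpa only [mul_zero] using (tendsto_decayRate hα).const_mul 6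
  refine squeeze_zero' (.of_forall fun ε ↦ Real.iSup_nonneg fun p ↦ Real.iSup_nonneg fun _ ↦
    norm_nonneg _) ?_ hlim
  filter_upwards [Ioo_mem_nhdsGT (by norm_num : (0 : ℝ) < 1 / 4)] with ε hε
  have hnonneg : 0 ≤ 6 * decayRate α ε :=
    mul_nonneg (by norm_num) (decayRate_nonneg hα ⟨hε.1, hε.2.trans (by norm_num)⟩)
  exact Real.iSup_le (fun p ↦ Real.iSup_le (norm_fderiv_uFun_le hα hε) hnonneg) hnonneg

lemma tendsto_integral_hessian_uFun_sq (hα : 0 < α) :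
    Tendsto (fun ε ↦ ∫ p in diskD, (uxx α ε p ^ 2 + 2 * uxy α ε p ^ 2 + uyy α ε p ^ 2))
      (𝓝[>] 0) (𝓝 0) := by
  have hint : IntegrableOn (fun p : ℝ × ℝ ↦ ‖p‖ ^ (-1 : ℝ)) diskD :=
    (integrableOn_ball_norm_rpow volume (by norm_num)).mono_set diskD_subset_ball
  have hlim : Tendsto (fun ε ↦ 82 * decayRate α ε ^ 2 * ∫ p in diskD, ‖p‖ ^ (-1 : ℝ))
      (𝓝[>] 0) (𝓝 0) := by
    simpa using (((tendsto_decayRate hα).pow 2).const_mul 82).mul_const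
      (∫ p in diskD, ‖p‖ ^ (-1 : ℝ))
  refine squeeze_zero_norm' ?_ hlim
  filter_upwards [Ioo_mem_nhdsGT (by norm_num : (0 : ℝ) < 1 / 4)] with ε hε
  rw [← integral_const_mul]
  refine norm_integral_le_of_norm_le (hint.const_mul _) ?_
  filter_upwards [ae_restrict_mem measurableSet_diskD,
    ae_restrict_of_ae (Measure.ae_ne volume 0)] with p hp hp0
  rw [Real.norm_of_nonneg (by positivity)]
  exact hessian_uFun_sq_le hα hε hp hp0

end UFun

theorem stmt6_general (α : ℝ) (hα : 0 < α) :
    (∀ ε ∈ Ioo (0 : ℝ) 1,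
        fderiv ℝ (uFun α ε) (0, 0) = 0 ∧
          deriv (fun x => deriv (fun y => uFun α ε (x, y)) 0) 0 = 1) ∧
    Tendsto (fun ε => ⨆ p ∈ diskD, ‖fderiv ℝ (uFun α ε) p‖)
      (nhdsWithin 0 (Ioi 0)) (nhds 0) ∧
    Tendsto (fun ε => ∫ p in diskD,
        ((uxx α ε p) ^ 2 + 2 * (uxy α ε p) ^ 2 + (uyy α ε p) ^ 2))
      (nhdsWithin 0 (Ioi 0)) (nhds 0) :=
  ⟨fun _ hε ↦ ⟨fderiv_uFun_zero α hε, uxy_zero α hε⟩, tendsto_iSup_norm_fderiv_uFun hα,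
    tendsto_integral_hessian_uFun_sq hα⟩

/-- Remark 2.5: optimality of the hypotheses.
(i) For every `ε ∈ (0,1)` the gradient of `u_ε` vanishes at the origin and
`∂²u_ε/∂x∂y(0,0) = 1`; (ii) `sup_D ‖∇u_ε‖ → 0` as `ε → 0⁺`;
(iii) `∫_D ((u_ε)_{xx}² + 2 (u_ε)_{xy}² + (u_ε)_{yy}²) → 0` as `ε → 0⁺`. -/
theorem stmt6 (α : ℝ) (hα : α ∈ Ioo (0 : ℝ) (1 / 2)) :
    (∀ ε ∈ Ioo (0 : ℝ) 1,
        fderiv ℝ (uFun α ε) (0, 0) = 0 ∧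
          deriv (fun x => deriv (fun y => uFun α ε (x, y)) 0) 0 = 1) ∧
    Tendsto (fun ε => ⨆ p ∈ diskD, ‖fderiv ℝ (uFun α ε) p‖)
      (nhdsWithin 0 (Ioi 0)) (nhds 0) ∧
    Tendsto (fun ε => ∫ p in diskD,
        ((uxx α ε p) ^ 2 + 2 * (uxy α ε p) ^ 2 + (uyy α ε p) ^ 2))
      (nhdsWithin 0 (Ioi 0)) (nhds 0) :=
  stmt6_general α hα.1
end
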